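/- arXiv:1108.4980 — 2 statements merged into one kernel-verified Lean document; each statement's English description precedes it below -/
import Mathlib

section
/- For every real q with |q| < 1, Π_{m=0}^{∞} (1 + √2 · q^{2m+1} + q^{4m+2})(1 − q^{2m+2}) = φ(−q¹⁶) + √2 · q · ψ(−q⁸). -/
/-- Ramanujan's theta function `φ(q) = ∑_{n ∈ ℤ} q^{n²}`. -/
noncomputable def phi (q : ℝ) : ℝ := ∑' n : ℤ, q ^ (n ^ 2)

/-- Ramanujan's theta function `ψ(q) = ∑_{n=0}^∞ q^{n(n+1)/2}`. -/
noncomputable def psi (q : ℝ) : ℝ := ∑' n : ℕ, q ^ (n * (n + 1) / 2)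

/-!
Let `z = exp (π i / 4)`, so that `z + z⁻¹ = √2`. The product is then the left-hand side of the
Jacobi triple product identity
`∏ (1 + z q ^ (2 m + 1)) (1 + z⁻¹ q ^ (2 m + 1)) (1 - q ^ (2 m + 2)) = ∑ z ^ n q ^ n ^ 2`.
Because `z ^ 4 = -1`, the terms of the series with `n ≡ 2 (mod 4)` cancel in the pairs `±n`, those
with `4 ∣ n` add up to `φ(-q ^ 16)`, and the pair `n = ±(2 k + 1)` contributes
`(-1) ^ (k (k + 1) / 2) √2 q ^ (2 k + 1) ^ 2`, which is `√2 q` times the `k`-th term of `ψ(-q ^ 8)`.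

The triple product identity is the limit `N → ∞` of the `q`-binomial theorem for
`∏_{k < 2 N} (1 + x p ^ k)` with `p = q ^ 2` and `x = z q ^ (1 - 2 N)`, whose factors pair up to
those of the first two products. Its Gaussian coefficients are uniformly bounded and each tends to
`∏ (1 - q ^ (2 m + 2))⁻¹`, so dominated convergence applies.
-/

open Filter Topology Finset

section GaussianBinomial

section CommSemiring

variable {R : Type*} [CommSemiring R]

/-- The Gaussian binomial coefficient `[n choose k]_p`. It is defined by the `p`-Pascal rule rather
than as a quotient of products, so that it makes sense for every element `p` of a semiring. -/
def gaussBinom (p : R) : ℕ → ℕ → R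
  | _, 0 => 1
  | 0, _ + 1 => 0
  | n + 1, k + 1 => gaussBinom p n k + p ^ (k + 1) * gaussBinom p n (k + 1)

@[simp]
theorem gaussBinom_zero_right (p : R) (n : ℕ) : gaussBinom p n 0 = 1 := by
  cases n <;> rfl

theorem gaussBinom_succ_succ (p : R) (n k : ℕ) :
    gaussBinom p (n + 1) (k + 1) = gaussBinom p n k + p ^ (k + 1) * gaussBinom p n (k + 1) :=
  rfl

theorem gaussBinom_eq_zero_of_lt (p : R) : ∀ {n k : ℕ}, n < k → gaussBinom p n k = 0
  | _, 0, h => absurd h (Nat.not_lt_zero _)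
  | 0, _ + 1, _ => rfl
  | n + 1, k + 1, h => by
    have hnk : n < k := Nat.succ_lt_succ_iff.mp h
    rw [gaussBinom_succ_succ, gaussBinom_eq_zero_of_lt p hnk,
      gaussBinom_eq_zero_of_lt p (hnk.trans k.lt_succ_self), mul_zero, add_zero]

@[simp]
theorem gaussBinom_self (p : R) : ∀ n : ℕ, gaussBinom p n n = 1
  | 0 => rfl
  | n + 1 => by
    rw [gaussBinom_succ_succ, gaussBinom_self p n, gaussBinom_eq_zero_of_lt p n.lt_succ_self,
      mul_zero, add_zero]

theorem prod_range_one_add_mul_pow_eq_sum_gaussBinom (p x : R) (n : ℕ) :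
    ∏ k ∈ range n, (1 + x * p ^ k) =
      ∑ j ∈ range (n + 1), p ^ j.choose 2 * gaussBinom p n j * x ^ j := by
  induction n generalizing x with
  | zero => simp
  | succ n ih =>
    let t (j : ℕ) : R := p ^ j.choose 2 * gaussBinom p n j * (x * p) ^ j
    have pascal (j : ℕ) : p ^ (j + 1).choose 2 * gaussBinom p (n + 1) (j + 1) * x ^ (j + 1) =
        x * t j + t (j + 1) := by
      simp only [t, gaussBinom_succ_succ, Nat.choose_succ_succ' j 1, Nat.choose_one_right]
      ring
    have sum_t_succ : ∑ j ∈ range (n + 1), t (j + 1) + 1 = ∑ j ∈ range (n + 1), t j := by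
      have t_zero : t 0 = 1 := by simp [t]
      have t_last : t (n + 1) = 0 := by simp [t, gaussBinom_eq_zero_of_lt p n.lt_succ_self]
      rw [← t_zero, ← sum_range_succ', sum_range_succ, t_last, add_zero]
    calc ∏ k ∈ range (n + 1), (1 + x * p ^ k)
        = (∏ k ∈ range n, (1 + x * p * p ^ k)) * (1 + x) := by
          simp only [prod_range_succ', pow_succ', mul_assoc, pow_zero, mul_one]
      _ = x * ∑ j ∈ range (n + 1), t j + (∑ j ∈ range (n + 1), t (j + 1) + 1) := by
          rw [ih, sum_t_succ]
          ring
      _ = ∑ j ∈ range (n + 2), p ^ j.choose 2 * gaussBinom p (n + 1) j * x ^ j := by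
          rw [sum_range_succ' _ (n + 1)]
          simp only [pascal, sum_add_distrib, mul_sum]
          simp [add_assoc]

end CommSemiring

section CommRing

variable {R : Type*} [CommRing R]

/-- The finite `q`-Pochhammer symbol `(a; p)_n = (1 - a)(1 - a p) ⋯ (1 - a p ^ (n - 1))`. -/
def qPochhammer (a p : R) (n : ℕ) : R :=
  ∏ i ∈ range n, (1 - a * p ^ i)

theorem qPochhammer_zero (a p : R) : qPochhammer a p 0 = 1 :=
  prod_range_zero _

theorem qPochhammer_succ (a p : R) (n : ℕ) :
    qPochhammer a p (n + 1) = qPochhammer a p n * (1 - a * p ^ n) :=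
  prod_range_succ _ n

theorem gaussBinom_add_mul_qPochhammer (p : R) : ∀ j k : ℕ,
    gaussBinom p (j + k) j * (qPochhammer p p j * qPochhammer p p k) = qPochhammer p p (j + k)
  | 0, k => by simp [qPochhammer_zero]
  | j + 1, 0 => by simp [qPochhammer_zero]
  | j + 1, k + 1 => by
    have ih_left := gaussBinom_add_mul_qPochhammer p j (k + 1)
    have ih_right := gaussBinom_add_mul_qPochhammer p (j + 1) k
    rw [Nat.add_right_comm, Nat.add_assoc] at ih_right
    rw [show j + 1 + (k + 1) = j + (k + 1) + 1 by ring, gaussBinom_succ_succ,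
      qPochhammer_succ p p (j + (k + 1)), qPochhammer_succ p p j, qPochhammer_succ p p k] at *
    linear_combination (1 - p ^ (j + 1)) * ih_left + p ^ (j + 1) * (1 - p ^ (k + 1)) * ih_right

end CommRing

end GaussianBinomial

section Limits

variable {𝕜 : Type*} [NormedField 𝕜] {p : 𝕜}

theorem summable_norm_neg_mul_pow (a : 𝕜) (hp : ‖p‖ < 1) :
    Summable fun i : ℕ ↦ ‖-(a * p ^ i)‖ := by
  simpa using (summable_geometric_of_lt_one (norm_nonneg p) hp).mul_left ‖a‖

theorem norm_pow_lt_one (hp : ‖p‖ < 1) {n : ℕ} (hn : n ≠ 0) : ‖p ^ n‖ < 1 := by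
  rw [norm_pow]
  exact pow_lt_one₀ (norm_nonneg p) hp hn

theorem one_sub_mul_pow_self_ne_zero (hp : ‖p‖ < 1) (i : ℕ) : 1 - p * p ^ i ≠ 0 := by
  intro h
  have norm_lt := norm_pow_lt_one hp i.succ_ne_zero
  rw [pow_succ', ← sub_eq_zero.mp h, norm_one] at norm_lt
  exact lt_irrefl _ norm_lt

theorem qPochhammer_self_ne_zero (hp : ‖p‖ < 1) (n : ℕ) : qPochhammer p p n ≠ 0 :=
  prod_ne_zero_iff.mpr fun i _ ↦ one_sub_mul_pow_self_ne_zero hp i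

theorem gaussBinom_add_eq_div (hp : ‖p‖ < 1) (j k : ℕ) :
    gaussBinom p (j + k) j =
      qPochhammer p p (j + k) / (qPochhammer p p j * qPochhammer p p k) :=
  eq_div_of_mul_eq (mul_ne_zero (qPochhammer_self_ne_zero hp j) (qPochhammer_self_ne_zero hp k))
    (gaussBinom_add_mul_qPochhammer p j k)

variable [CompleteSpace 𝕜]

theorem multipliable_one_sub_mul_pow (a : 𝕜) (hp : ‖p‖ < 1) :
    Multipliable fun i : ℕ ↦ 1 - a * p ^ i := by
  simpa only [sub_eq_add_neg] using
    multipliable_one_add_of_summable (summable_norm_neg_mul_pow a hp)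

theorem tendsto_qPochhammer (a : 𝕜) (hp : ‖p‖ < 1) :
    Tendsto (qPochhammer a p) atTop (𝓝 (∏' i : ℕ, (1 - a * p ^ i))) :=
  (multipliable_one_sub_mul_pow a hp).tendsto_prod_tprod_nat

theorem tprod_one_sub_mul_pow_self_ne_zero (hp : ‖p‖ < 1) :
    ∏' i : ℕ, (1 - p * p ^ i) ≠ 0 := by
  simp only [sub_eq_add_neg]
  refine tprod_one_add_ne_zero_of_summable (fun i ↦ ?_) (summable_norm_neg_mul_pow p hp)
  simpa only [sub_eq_add_neg] using one_sub_mul_pow_self_ne_zero hp i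

theorem tendsto_gaussBinom_add {ι : Type*} {l : Filter ι} {j k : ι → ℕ} (hp : ‖p‖ < 1)
    (hj : Tendsto j l atTop) (hk : Tendsto k l atTop) :
    Tendsto (fun i ↦ gaussBinom p (j i + k i) (j i)) l (𝓝 (∏' i : ℕ, (1 - p * p ^ i))⁻¹) := by
  have lim := tendsto_qPochhammer p hp
  have lim_ne := tprod_one_sub_mul_pow_self_ne_zero hp
  have quotient := (lim.comp (hj.atTop_add_atTop hk)).div ((lim.comp hj).mul (lim.comp hk))
    (mul_ne_zero lim_ne lim_ne)
  rw [div_mul_cancel_left₀ lim_ne] at quotient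
  exact quotient.congr fun i ↦ (gaussBinom_add_eq_div hp (j i) (k i)).symm

theorem exists_forall_norm_gaussBinom_add_le (hp : ‖p‖ < 1) :
    ∃ C, ∀ j k : ℕ, ‖gaussBinom p (j + k) j‖ ≤ C := by
  have lim := tendsto_qPochhammer p hp
  have lim_inv := lim.inv₀ (tprod_one_sub_mul_pow_self_ne_zero hp)
  obtain ⟨A, hA⟩ := (Metric.isBounded_range_of_tendsto _ lim).exists_norm_le
  obtain ⟨B, hB⟩ := (Metric.isBounded_range_of_tendsto _ lim_inv).exists_norm_le
  simp only [Set.forall_mem_range] at hA hB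
  have B_nonneg : 0 ≤ B := (norm_nonneg _).trans (hB 0)
  refine ⟨A * (B * B), fun j k ↦ ?_⟩
  rw [gaussBinom_add_eq_div hp, div_eq_mul_inv, mul_inv, norm_mul, norm_mul]
  exact mul_le_mul (hA _) (mul_le_mul (hB j) (hB k) (norm_nonneg _) B_nonneg) (by positivity)
    ((norm_nonneg _).trans (hA 0))

end Limits

section TripleProduct

theorem cast_choose_two_mul_two (n : ℕ) : (n.choose 2 : ℤ) * 2 = n * (n - 1) := by
  induction n with
  | zero => simp
  | succ n ih =>
    rw [Nat.choose_succ_succ' n 1, Nat.choose_one_right]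
    push_cast
    linear_combination ih

section Field

variable {K : Type*} [Field K] {q z : K}

theorem prod_range_two_mul_one_add_mul_zpow (hq : q ≠ 0) (hz : z ≠ 0) (N : ℕ) :
    ∏ k ∈ range (2 * N), (1 + z * q ^ (2 * (k : ℤ) + 1 - 2 * N)) =
      z ^ N * (q ^ N ^ 2)⁻¹ *
        ∏ m ∈ range N, ((1 + z * q ^ (2 * m + 1)) * (1 + z⁻¹ * q ^ (2 * m + 1))) := by
  induction N with
  | zero => simp
  | succ N ih =>
    have inner (k : ℕ) :
        2 * ((k + 1 : ℕ) : ℤ) + 1 - 2 * ((N + 1 : ℕ) : ℤ) = 2 * (k : ℤ) + 1 - 2 * N := by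
      push_cast
      ring
    have last : 2 * ((2 * N : ℕ) : ℤ) + 1 - 2 * N = (2 * N + 1 : ℕ) := by
      push_cast
      ring
    have first : 2 * ((0 : ℕ) : ℤ) + 1 - 2 * ((N + 1 : ℕ) : ℤ) = -(2 * N + 1 : ℕ) := by
      push_cast
      ring
    rw [show 2 * (N + 1) = 2 * N + 1 + 1 by ring, prod_range_succ, prod_range_succ']
    simp only [inner]
    rw [ih, last, first, zpow_neg, zpow_natCast, prod_range_succ,
      show (N + 1) ^ 2 = N ^ 2 + (2 * N + 1) by ring, pow_add q (N ^ 2)]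
    field_simp
    ring

theorem sq_pow_choose_two_mul_zpow_pow (hq : q ≠ 0) (N j : ℕ) :
    (q ^ 2) ^ j.choose 2 * (q ^ (1 - 2 * N : ℤ)) ^ j =
      (q ^ N ^ 2)⁻¹ * q ^ ((j - N : ℤ) ^ 2) := by
  simp only [← zpow_natCast, ← zpow_mul, ← zpow_neg, ← zpow_add₀ hq]
  congr 1
  push_cast
  linear_combination cast_choose_two_mul_two j

theorem prod_range_one_add_mul_one_add_inv_mul_eq_sum_range (hq : q ≠ 0) (hz : z ≠ 0) (N : ℕ) :
    ∏ m ∈ range N, ((1 + z * q ^ (2 * m + 1)) * (1 + z⁻¹ * q ^ (2 * m + 1))) =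
      ∑ j ∈ range (2 * N + 1),
        z ^ (j - N : ℤ) * q ^ ((j - N : ℤ) ^ 2) * gaussBinom (q ^ 2) (2 * N) j := by
  have factor (k : ℕ) : 1 + z * q ^ (2 * (k : ℤ) + 1 - 2 * N) =
      1 + z * q ^ (1 - 2 * N : ℤ) * (q ^ 2) ^ k := by
    rw [mul_assoc, ← pow_mul, ← zpow_natCast q, ← zpow_add₀ hq]
    congr 3
    push_cast
    ring
  have binomial := prod_range_two_mul_one_add_mul_zpow hq hz N
  simp only [factor, prod_range_one_add_mul_pow_eq_sum_gaussBinom] at binomial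
  refine mul_left_cancel₀ (show z ^ N * (q ^ N ^ 2)⁻¹ ≠ 0 by positivity) ?_
  rw [← binomial, mul_sum]
  refine sum_congr rfl fun j _ ↦ ?_
  have z_shift : z ^ j = z ^ N * z ^ (j - N : ℤ) := by
    rw [← zpow_natCast, ← zpow_natCast, ← zpow_add₀ hz, add_sub_cancel]
  rw [mul_pow, z_shift]
  linear_combination z ^ N * z ^ (j - N : ℤ) * gaussBinom (q ^ 2) (2 * N) j *
    sq_pow_choose_two_mul_zpow_pow hq N j

theorem prod_range_one_add_mul_one_add_inv_mul_eq_sum_Icc (hq : q ≠ 0) (hz : z ≠ 0) (N : ℕ) :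
    ∏ m ∈ range N, ((1 + z * q ^ (2 * m + 1)) * (1 + z⁻¹ * q ^ (2 * m + 1))) =
      ∑ n ∈ Icc (-N : ℤ) N,
        z ^ n * q ^ n ^ 2 * gaussBinom (q ^ 2) ((N + n).toNat + (N - n).toNat) (N + n).toNat := by
  rw [prod_range_one_add_mul_one_add_inv_mul_eq_sum_range hq hz]
  refine sum_nbij' (fun j : ℕ ↦ (j - N : ℤ)) (fun n : ℤ ↦ (N + n).toNat) ?_ ?_ ?_ ?_ ?_
  all_goals simp only [mem_range, mem_Icc]
  · lia
  · lia
  · lia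
  · lia
  · intro j hj
    rw [show (N + (j - N : ℤ)).toNat = j by lia, show j + (N - (j - N) : ℤ).toNat = 2 * N by lia]

end Field

section NormedField

variable {𝕜 : Type*} [NormedField 𝕜] {q z : 𝕜}

theorem summable_norm_mul_pow_pow_self (c : 𝕜) (hq : ‖q‖ < 1) :
    Summable fun n : ℕ ↦ ‖(c * q ^ n) ^ n‖ := by
  have base_tendsto : Tendsto (fun n ↦ ‖c * q ^ n‖) atTop (𝓝 0) := by
    simpa using ((tendsto_pow_atTop_nhds_zero_of_norm_lt_one hq).const_mul c).norm
  refine summable_geometric_two.of_norm_bounded_eventually_nat ?_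
  filter_upwards [base_tendsto.eventually_le_const one_half_pos] with n hn
  rw [norm_norm, norm_pow]
  exact pow_le_pow_left₀ (norm_nonneg _) hn n

theorem summable_norm_zpow_mul_zpow_sq (z : 𝕜) (hq : ‖q‖ < 1) :
    Summable fun n : ℤ ↦ ‖z ^ n * q ^ n ^ 2‖ := by
  have nat_term (c : 𝕜) (n : ℕ) : c ^ n * q ^ (n : ℤ) ^ 2 = (c * q ^ n) ^ n := by
    rw [mul_pow, ← pow_mul, ← sq]
    norm_cast
  refine .of_nat_of_neg ?_ ?_
  · simpa only [zpow_natCast, nat_term] using summable_norm_mul_pow_pow_self z hq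
  · simpa only [← inv_zpow', zpow_natCast, neg_sq, nat_term]
      using summable_norm_mul_pow_pow_self z⁻¹ hq

variable [CompleteSpace 𝕜]

theorem tendsto_prod_range_one_add_mul_one_add_inv_mul (hq₀ : q ≠ 0) (hq : ‖q‖ < 1) (hz : z ≠ 0) :
    Tendsto
      (fun N ↦ ∏ m ∈ range N, ((1 + z * q ^ (2 * m + 1)) * (1 + z⁻¹ * q ^ (2 * m + 1)))) atTop
      (𝓝 ((∑' n : ℤ, z ^ n * q ^ n ^ 2) * (∏' i : ℕ, (1 - q ^ 2 * (q ^ 2) ^ i))⁻¹)) := by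
  have hq2 : ‖q ^ 2‖ < 1 := norm_pow_lt_one hq two_ne_zero
  obtain ⟨C, hC⟩ := exists_forall_norm_gaussBinom_add_le hq2
  simp only [prod_range_one_add_mul_one_add_inv_mul_eq_sum_Icc hq₀ hz, ← tsum_mul_right]
  refine Tendsto.congr (fun N ↦ (sum_eq_tsum_indicator _ _).symm) ?_
  refine tendsto_tsum_of_dominated_convergence
    ((summable_norm_zpow_mul_zpow_sq z hq).mul_right C) (fun n ↦ ?_) (.of_forall fun N n ↦ ?_)
  · have upper : Tendsto (fun N : ℕ ↦ (N + n).toNat) atTop atTop :=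
      tendsto_atTop.mpr fun b ↦ (eventually_ge_atTop (b + n.natAbs)).mono fun N _ ↦ by lia
    have lower : Tendsto (fun N : ℕ ↦ (N - n).toNat) atTop atTop :=
      tendsto_atTop.mpr fun b ↦ (eventually_ge_atTop (b + n.natAbs)).mono fun N _ ↦ by lia
    refine ((tendsto_gaussBinom_add hq2 upper lower).const_mul (z ^ n * q ^ n ^ 2)).congr' ?_
    filter_upwards [eventually_ge_atTop n.natAbs] with N hN
    have n_mem : n ∈ (Icc (-N : ℤ) N : Set ℤ) := by
      simp only [coe_Icc, Set.mem_Icc]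
      lia
    rw [Set.indicator_of_mem n_mem]
  · refine (norm_indicator_le_norm_self _ _).trans ?_
    rw [norm_mul]
    exact mul_le_mul_of_nonneg_left (hC _ _) (norm_nonneg _)

theorem hasProd_jacobi_triple_product (hq : ‖q‖ < 1) (hz : z ≠ 0) :
    HasProd
      (fun m : ℕ ↦ (1 + z * q ^ (2 * m + 1)) * (1 + z⁻¹ * q ^ (2 * m + 1)) * (1 - q ^ (2 * m + 2)))
      (∑' n : ℤ, z ^ n * q ^ n ^ 2) := by
  rcases eq_or_ne q 0 with rfl | hq₀
  · rw [tsum_eq_single 0 fun n hn ↦ by rw [zero_zpow _ (pow_ne_zero 2 hn), mul_zero]]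
    simp
  have hq2 : ‖q ^ 2‖ < 1 := norm_pow_lt_one hq two_ne_zero
  have odd_factor (c : 𝕜) (m : ℕ) : 1 + c * q ^ (2 * m + 1) = 1 - -(c * q) * (q ^ 2) ^ m := by
    ring
  have even_factor (m : ℕ) : 1 - q ^ (2 * m + 2) = 1 - q ^ 2 * (q ^ 2) ^ m := by
    ring
  have multipliable : Multipliable fun m : ℕ ↦
      (1 + z * q ^ (2 * m + 1)) * (1 + z⁻¹ * q ^ (2 * m + 1)) * (1 - q ^ (2 * m + 2)) := by
    simp only [odd_factor, even_factor]
    exact ((multipliable_one_sub_mul_pow _ hq2).mul (multipliable_one_sub_mul_pow _ hq2)).mul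
      (multipliable_one_sub_mul_pow _ hq2)
  rw [multipliable.hasProd_iff_tendsto_nat]
  have limit := (tendsto_prod_range_one_add_mul_one_add_inv_mul hq₀ hq hz).mul
    (tendsto_qPochhammer (q ^ 2) hq2)
  rw [inv_mul_cancel_right₀ (tprod_one_sub_mul_pow_self_ne_zero hq2)] at limit
  refine limit.congr fun N ↦ ?_
  simp only [qPochhammer, even_factor, prod_mul_distrib]

end NormedField

end TripleProduct

section RootsOfUnity

theorem tsum_int_eq_tsum_even_add_tsum_nat_odd {M : Type*} [AddCommGroup M] [UniformSpace M]
    [IsUniformAddGroup M] [CompleteSpace M] [T2Space M] {f : ℤ → M} (hf : Summable f) :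
    ∑' n, f n = ∑' n, f (2 * n) + ∑' n : ℕ, (f (2 * n + 1) + f (-(2 * n + 1))) := by
  have two_mul_inj : Function.Injective fun n : ℤ ↦ 2 * n := mul_right_injective₀ two_ne_zero
  have odd_inj : Function.Injective fun n : ℤ ↦ 2 * n + 1 := (add_left_injective 1).comp two_mul_inj
  have even_sum := (hf.comp_injective two_mul_inj).hasSum
  have odd_sum := (hf.comp_injective odd_inj).hasSum
  have compl : IsCompl (Set.range fun n : ℤ ↦ 2 * n) (Set.range fun n : ℤ ↦ 2 * n + 1) := by
    simpa using Int.isCompl_even_odd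
  rw [((two_mul_inj.hasSum_range_iff.mpr even_sum).add_isCompl compl
    (odd_inj.hasSum_range_iff.mpr odd_sum)).tsum_eq, ← odd_sum.nat_add_neg_add_one.tsum_eq]
  refine congrArg _ (tsum_congr fun n ↦ ?_)
  simp only [Function.comp_apply]
  congr 2

theorem neg_one_zpow_sq {K : Type*} [DivisionRing K] (n : ℤ) : (-1 : K) ^ n ^ 2 = (-1) ^ n := by
  rcases n.even_or_odd with hn | hn
  · rw [hn.neg_one_zpow, (hn.pow_of_ne_zero two_ne_zero).neg_one_zpow]
  · rw [hn.neg_one_zpow, hn.pow.neg_one_zpow]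

section Field

variable {K : Type*} [Field K] {z : K}

theorem zpow_odd_add_zpow_neg_odd_of_sq_eq_neg_one (hz : z ^ 2 = -1) (n : ℕ) :
    z ^ (2 * n + 1 : ℤ) + z ^ (-(2 * n + 1) : ℤ) = 0 := by
  have inv_eq : z⁻¹ = -z := inv_eq_of_mul_eq_one_right (by linear_combination -hz)
  rw [← inv_zpow', inv_eq, Odd.neg_zpow ⟨n, rfl⟩, add_neg_cancel]

theorem zpow_odd_add_zpow_neg_odd_of_pow_four_eq_neg_one (hz : z ^ 4 = -1) (n : ℕ) :
    z ^ (2 * n + 1 : ℤ) + z ^ (-(2 * n + 1) : ℤ) = (-1) ^ (n * (n + 1) / 2) * (z + z⁻¹) := by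
  have inv_pow_three : z⁻¹ ^ 3 = -z := by
    rw [inv_pow]
    exact inv_eq_of_mul_eq_one_right (by linear_combination -hz)
  have pow_three : z ^ 3 = -z⁻¹ := by
    rw [← inv_inj, ← inv_pow, inv_pow_three, inv_neg, inv_inv]
  have inv_pow_four : z⁻¹ ^ 4 = -1 := by
    rw [inv_pow, hz, inv_neg_one]
  rw [← inv_zpow', show (2 * n + 1 : ℤ) = (2 * n + 1 : ℕ) by norm_cast, zpow_natCast, zpow_natCast]
  induction n using Nat.twoStepInduction with
  | zero => simp
  | one =>
    norm_num [pow_three, inv_pow_three]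
  | more n ih _ =>
    have triangle : (n + 2) * (n + 2 + 1) / 2 = n * (n + 1) / 2 + 2 * (n + 1) + 1 := by
      rw [show (n + 2) * (n + 2 + 1) = n * (n + 1) + (2 * (n + 1) + 1) * 2 by ring,
        Nat.add_mul_div_right _ _ two_pos, add_assoc]
    rw [show 2 * (n + 2) + 1 = 2 * n + 1 + 4 by ring, pow_add z, pow_add z⁻¹, hz, inv_pow_four,
      ← add_mul, ih, triangle, pow_succ, pow_add, (even_two_mul (n + 1)).neg_one_pow]
    ring

end Field

section NormedField

variable {𝕜 : Type*} [NormedField 𝕜] [CompleteSpace 𝕜] {q z : 𝕜}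

theorem tsum_zpow_mul_zpow_sq_of_sq_eq_neg_one (hz : z ^ 2 = -1) (hq : ‖q‖ < 1) :
    ∑' n : ℤ, z ^ n * q ^ n ^ 2 = ∑' n : ℤ, (-q ^ 4) ^ n ^ 2 := by
  have odd_cancel (n : ℕ) : z ^ (2 * n + 1 : ℤ) * q ^ (2 * n + 1 : ℤ) ^ 2 +
      z ^ (-(2 * n + 1) : ℤ) * q ^ (-(2 * n + 1) : ℤ) ^ 2 = 0 := by
    rw [neg_sq, ← add_mul, zpow_odd_add_zpow_neg_odd_of_sq_eq_neg_one hz, zero_mul]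
  have even_term (n : ℤ) : z ^ (2 * n) * q ^ (2 * n) ^ 2 = (-q ^ 4) ^ n ^ 2 := by
    rw [neg_eq_neg_one_mul, mul_zpow, neg_one_zpow_sq, ← hz, mul_pow, zpow_mul, zpow_mul]
    norm_cast
  rw [tsum_int_eq_tsum_even_add_tsum_nat_odd (summable_norm_zpow_mul_zpow_sq z hq).of_norm]
  simp only [odd_cancel, even_term, tsum_zero, add_zero]

theorem tsum_zpow_mul_zpow_sq_of_pow_four_eq_neg_one (hz : z ^ 4 = -1) (hq : ‖q‖ < 1) :
    ∑' n : ℤ, z ^ n * q ^ n ^ 2 =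
      ∑' n : ℤ, (-q ^ 16) ^ n ^ 2 + (z + z⁻¹) * q * ∑' n : ℕ, (-q ^ 8) ^ (n * (n + 1) / 2) := by
  have even_term (n : ℤ) : z ^ (2 * n) * q ^ (2 * n) ^ 2 = (z ^ 2) ^ n * (q ^ 4) ^ n ^ 2 := by
    rw [mul_pow, zpow_mul, zpow_mul]
    norm_cast
  have even_sum : ∑' n : ℤ, z ^ (2 * n) * q ^ (2 * n) ^ 2 = ∑' n : ℤ, (-q ^ 16) ^ n ^ 2 := by
    simp only [even_term]
    rw [tsum_zpow_mul_zpow_sq_of_sq_eq_neg_one (by rw [← pow_mul, hz])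
      (norm_pow_lt_one hq four_ne_zero), ← pow_mul]
  have odd_sq (n : ℕ) : (2 * n + 1 : ℤ) ^ 2 = (8 * (n * (n + 1) / 2) + 1 : ℕ) := by
    have halve := Nat.div_mul_cancel (Nat.even_mul_succ_self n).two_dvd
    zify at halve ⊢
    linear_combination -4 * halve
  have odd_term (n : ℕ) : z ^ (2 * n + 1 : ℤ) * q ^ (2 * n + 1 : ℤ) ^ 2 +
      z ^ (-(2 * n + 1) : ℤ) * q ^ (-(2 * n + 1) : ℤ) ^ 2 =
        (z + z⁻¹) * q * (-q ^ 8) ^ (n * (n + 1) / 2) := by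
    rw [neg_sq, ← add_mul, zpow_odd_add_zpow_neg_odd_of_pow_four_eq_neg_one hz, odd_sq,
      zpow_natCast, pow_succ, pow_mul, neg_pow (q ^ 8)]
    ring
  rw [tsum_int_eq_tsum_even_add_tsum_nat_odd (summable_norm_zpow_mul_zpow_sq z hq).of_norm,
    even_sum]
  simp only [odd_term, tsum_mul_left]

theorem hasProd_triple_product_of_pow_four_eq_neg_one (hz : z ^ 4 = -1) (hq : ‖q‖ < 1) :
    HasProd
      (fun m : ℕ ↦ (1 + (z + z⁻¹) * q ^ (2 * m + 1) + q ^ (4 * m + 2)) * (1 - q ^ (2 * m + 2)))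
      (∑' n : ℤ, (-q ^ 16) ^ n ^ 2 +
        (z + z⁻¹) * q * ∑' n : ℕ, (-q ^ 8) ^ (n * (n + 1) / 2)) := by
  have hz₀ : z ≠ 0 := by
    rintro rfl
    simp at hz
  rw [← tsum_zpow_mul_zpow_sq_of_pow_four_eq_neg_one hz hq]
  refine (hasProd_jacobi_triple_product hq hz₀).congr_fun fun m ↦ ?_
  linear_combination -q ^ (4 * m + 2) * (1 - q ^ (2 * m + 2)) * mul_inv_cancel₀ hz₀

end NormedField

theorem exists_pow_four_eq_neg_one_and_add_inv_eq_sqrt_two :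
    ∃ z : ℂ, z ^ 4 = -1 ∧ z + z⁻¹ = (√2 : ℝ) := by
  refine ⟨Complex.exp (↑(Real.pi / 4) * Complex.I), ?_, ?_⟩
  · rw [← Complex.exp_nat_mul, ← Complex.exp_pi_mul_I]
    congr 1
    push_cast
    ring
  · rw [← Complex.exp_neg, ← neg_mul, ← Complex.two_cos, ← Complex.ofReal_cos,
      Real.cos_pi_div_four]
    push_cast
    ring

end RootsOfUnity

theorem F41_product_identity_general (q : ℂ) (hq : ‖q‖ < 1) :
    HasProd
      (fun m : ℕ ↦ (1 + (√2 : ℝ) * q ^ (2 * m + 1) + q ^ (4 * m + 2)) * (1 - q ^ (2 * m + 2)))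
      (∑' n : ℤ, (-q ^ 16) ^ n ^ 2 + (√2 : ℝ) * q * ∑' n : ℕ, (-q ^ 8) ^ (n * (n + 1) / 2)) := by
  obtain ⟨z, hz, hz_add⟩ := exists_pow_four_eq_neg_one_and_add_inv_eq_sqrt_two
  exact hz_add ▸ hasProd_triple_product_of_pow_four_eq_neg_one hz hq

/-- For every real `q` with `|q| < 1`,
`∏_{m=0}^∞ (1 + √2 q^{2m+1} + q^{4m+2})(1 - q^{2m+2}) = φ(-q¹⁶) + √2 q ψ(-q⁸)`. -/
theorem F41_product_identity (q : ℝ) (hq : |q| < 1) :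
    (∏' m : ℕ, (1 + Real.sqrt 2 * q ^ (2 * m + 1) + q ^ (4 * m + 2)) * (1 - q ^ (2 * m + 2)))
      = phi (-(q ^ 16)) + Real.sqrt 2 * q * psi (-(q ^ 8)) := by
  have complex := F41_product_identity_general q (by simpa using hq)
  refine HasProd.tprod_eq ((Complex.isUniformEmbedding_ofReal.isInducing.hasProd_iff
    (g := Complex.ofRealHom) _ _).mp ?_)
  simpa [phi, psi, Complex.ofReal_tsum, Function.comp_def] using complex
end

section
/- Let x > 0 be real, set q = e^{−π/x}, β = (1+√5)/2, and α = (1−√5)/2. Then F_{(5,1)}(x) = −(π/(5x)) · log( χ(q⁵)/χ⁵(q) ) − (π/(√5 · x)) · log( Π_{m odd, m≥1} (1 − β q^m + q^{2m}) / (1 − α q^m + q^{2m}) ). -/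
open Filter

/-- Ramanujan's theta function `χ(q) = ∏_{m=0}^∞ (1 + q^{2m+1})`. -/
noncomputable def chi (q : ℝ) : ℝ := ∏' m : ℕ, (1 + q ^ (2 * m + 1))

/-!
The partial fractions of `1 / sin` at an imaginary argument give
`∑_m (-1)^m / ((x m)² + y²) = π / (x y sinh (π y / x))`, a geometric series in the odd powers of
`q^|y|`, where `q = e^{-π/x}`. Exchanging the sums leaves, for each odd power `r` of `q`, the series
`∑_n (-1)^n r^|5n+1| / |5n+1|`. Averaging the two-sided logarithmic series
`∑_i r^|i| / |i| cos ((i - 1) θ) = -cos θ log (1 - 2 r cos θ + r²)` over the odd multiples `θ` of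
`π / 5` picks out exactly `i ≡ 1 mod 5` and produces the sign `(-1)^n`. The values of `2 cos θ` are
`α`, `β` and `-2`, and `1 + r⁵ = (1 + r) (1 - α r + r²) (1 - β r + r²)` brings in `χ(q⁵)`.
-/

section PartialFractions

open Complex
open scoped Real

theorem hasSum_neg_one_zpow_mul {K : Type*} [DivisionRing K] [TopologicalSpace K]
    [IsTopologicalRing K] {f : ℤ → K} {s e : K} (hf : HasSum f s)
    (heven : HasSum (fun k : ℤ ↦ f (2 * k)) e) :
    HasSum (fun m : ℤ ↦ (-1) ^ m * f m) (2 * e - s) := by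
  have hinj : Function.Injective fun k : ℤ ↦ 2 * k := mul_right_injective₀ two_ne_zero
  have hite : HasSum (fun m : ℤ ↦ if Even m then f m else 0) e := by
    refine (hinj.hasSum_iff fun m hm ↦ if_neg ?_).mp (heven.congr_fun fun k ↦ by simp)
    rintro ⟨k, rfl⟩
    exact hm ⟨k, two_mul k⟩
  refine ((hite.mul_left 2).sub hf).congr_fun fun m ↦ ?_
  rcases Int.even_or_odd m with hm | hm
  · rw [if_pos hm, hm.neg_one_zpow, one_mul, two_mul, add_sub_cancel_right]
  · rw [if_neg (Int.not_even_iff_odd.mpr hm), hm.neg_one_zpow]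
    simp

variable {z : ℂ}

theorem hasSum_one_div_sq_sub_int_sq (hz : z ∈ integerComplement) :
    HasSum (fun m : ℤ ↦ 1 / (z ^ 2 - m ^ 2)) (π / z * cot (π * z)) := by
  have hz0 : z ≠ 0 := integerComplement.ne_zero hz
  have hpos : HasSum (fun n : ℕ ↦ 1 / (z ^ 2 - (n + 1) ^ 2))
      ((π * cot (π * z) - 1 / z) / (2 * z)) := by
    have hcot := (summable_cotTerm hz).hasSum
    rw [show ∑' n, cotTerm z n = _ from (cot_series_rep' hz).symm] at hcot
    refine (hcot.div_const (2 * z)).congr_fun fun n ↦ ?_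
    rw [cotTerm_identity hz, ← sq_sub_sq, mul_div_cancel_left₀ _ (by simpa using hz0)]
  convert! HasSum.of_add_one_of_neg_add_one (f := fun m : ℤ ↦ 1 / (z ^ 2 - m ^ 2))
    (hpos.congr_fun fun n ↦ by push_cast; rfl)
    (hpos.congr_fun fun n ↦ by push_cast; rw [neg_sq]) using 1
  push_cast
  field_simp
  ring

theorem cot_half_sub_cot {w : ℂ} (hw : sin w ≠ 0) : cot (w / 2) - cot w = 1 / sin w := by
  obtain ⟨v, rfl⟩ : ∃ v, w = 2 * v := ⟨w / 2, by ring⟩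
  rw [mul_div_cancel_left₀ _ two_ne_zero, cot, cot, sin_two_mul, cos_two_mul]
  rw [sin_two_mul] at hw
  have hsin : sin v ≠ 0 := by rintro h; simp [h] at hw
  have hcos : cos v ≠ 0 := by rintro h; simp [h] at hw
  field_simp
  ring

theorem half_mem_integerComplement (hz : z ∈ integerComplement) : z / 2 ∈ integerComplement := by
  rintro ⟨k, hk⟩
  exact hz ⟨2 * k, by push_cast; rw [hk]; ring⟩

theorem hasSum_neg_one_zpow_div_sq_sub_int_sq (hz : z ∈ integerComplement) :
    HasSum (fun m : ℤ ↦ (-1) ^ m / (z ^ 2 - m ^ 2)) (π / (z * sin (π * z))) := by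
  have heven : HasSum (fun k : ℤ ↦ 1 / (z ^ 2 - ((2 * k : ℤ) : ℂ) ^ 2))
      (1 / 4 * (π / (z / 2) * cot (π * (z / 2)))) := by
    refine ((hasSum_one_div_sq_sub_int_sq (half_mem_integerComplement hz)).mul_left _).congr_fun
      fun k ↦ ?_
    rw [one_div_mul_one_div]
    push_cast
    ring_nf
  convert! hasSum_neg_one_zpow_mul (hasSum_one_div_sq_sub_int_sq hz) heven using 1
  · exact funext fun m ↦ (mul_one_div _ _).symm
  · have hcot := cot_half_sub_cot (sin_pi_mul_ne_zero hz)
    calc (π / (z * sin (π * z)) : ℂ) = π / z * (1 / sin (π * z)) := by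
          rw [div_mul_div_comm, mul_one]
      _ = 2 * (1 / 4 * (π / (z / 2) * cot (π * (z / 2)))) - π / z * cot (π * z) := by
          rw [← hcot]
          ring_nf

theorem ofReal_mul_I_mem_integerComplement {t : ℝ} (ht : t ≠ 0) : t * I ∈ integerComplement := by
  rintro ⟨k, hk⟩
  exact ht (by simpa using (congrArg im hk).symm)

theorem hasSum_neg_one_zpow_div_int_sq_add_sq {t : ℝ} (ht : t ≠ 0) :
    HasSum (fun m : ℤ ↦ (-1 : ℝ) ^ m / ((m : ℝ) ^ 2 + t ^ 2)) (π / (t * Real.sinh (π * t))) := by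
  rw [← hasSum_ofReal]
  have h := (hasSum_neg_one_zpow_div_sq_sub_int_sq (ofReal_mul_I_mem_integerComplement ht)).neg
  convert! h using 1
  · ext m
    rw [mul_pow, I_sq]
    push_cast
    rw [← div_neg]
    ring_nf
  · rw [← mul_assoc, sin_mul_I, mul_mul_mul_comm, I_mul_I]
    push_cast
    rw [mul_neg_one, div_neg, neg_neg]

theorem hasSum_neg_one_zpow_div_mul_sq_add_sq {x y : ℝ} (hx : x ≠ 0) (hy : y ≠ 0) :
    HasSum (fun m : ℤ ↦ (-1 : ℝ) ^ m / ((x * m) ^ 2 + y ^ 2))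
      (π / (x * y * Real.sinh (π * (y / x)))) := by
  convert! (hasSum_neg_one_zpow_div_int_sq_add_sq (div_ne_zero hy hx)).div_const (x ^ 2) using 1
  · ext m
    rw [div_div]
    congr 1
    field_simp
  · rw [div_div]
    congr 1
    field_simp

end PartialFractions

section LogSeries

open Complex
open scoped Real ComplexConjugate

variable {r : ℝ}

theorem normSq_one_sub_ofReal_mul_exp (r θ : ℝ) :
    normSq (1 - r * exp (θ * I)) = 1 - 2 * Real.cos θ * r + r ^ 2 := by
  rw [normSq_apply]
  simp only [sub_re, sub_im, one_re, one_im, re_ofReal_mul, im_ofReal_mul, exp_ofReal_mul_I_re,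
    exp_ofReal_mul_I_im]
  linear_combination r ^ 2 * Real.sin_sq_add_cos_sq θ

theorem norm_ofReal_mul_exp_lt_one (hr : |r| < 1) (θ : ℝ) : ‖r * exp (θ * I)‖ < 1 := by
  rwa [norm_mul, norm_exp_ofReal_mul_I, mul_one, norm_real, Real.norm_eq_abs]

theorem one_sub_two_cos_mul_add_sq_pos (hr : |r| < 1) (θ : ℝ) :
    0 < 1 - 2 * Real.cos θ * r + r ^ 2 := by
  rw [← normSq_one_sub_ofReal_mul_exp, normSq_pos, sub_ne_zero]
  intro h
  simpa [← h] using norm_ofReal_mul_exp_lt_one hr θ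

-- The term at `0` of this and the following series is `r ^ 0 / 0 = 0`.
theorem hasSum_nat_pow_div_mul_exp (hr : |r| < 1) (θ : ℝ) :
    HasSum (fun n : ℕ ↦ (r ^ n / n : ℝ) * exp (n * θ * I)) (-log (1 - r * exp (θ * I))) := by
  refine (hasSum_taylorSeries_neg_log (norm_ofReal_mul_exp_lt_one hr θ)).congr_fun fun n ↦ ?_
  rw [mul_pow, ← exp_nat_mul]
  push_cast
  ring_nf

theorem hasSum_int_pow_natAbs_div_mul_exp (hr : |r| < 1) (θ : ℝ) :
    HasSum (fun i : ℤ ↦ (r ^ i.natAbs / i.natAbs : ℝ) * exp (i * θ * I))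
      (-Real.log (1 - 2 * Real.cos θ * r + r ^ 2) : ℝ) := by
  have hpos := hasSum_nat_pow_div_mul_exp hr θ
  have hneg : HasSum (fun n : ℕ ↦ (r ^ n / n : ℝ) * exp ((-n : ℤ) * θ * I))
      (conj (-log (1 - r * exp (θ * I)))) := by
    refine (hasSum_conj'.mpr hpos).congr_fun fun n ↦ ?_
    rw [map_mul, conj_ofReal, ← exp_conj]
    simp
  have hlog : Real.log (1 - 2 * Real.cos θ * r + r ^ 2) = 2 * (log (1 - r * exp (θ * I))).re := by
    rw [← normSq_one_sub_ofReal_mul_exp, normSq_eq_norm_sq, Real.log_pow, log_re, Nat.cast_two]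
  convert! HasSum.of_nat_of_neg (hpos.congr_fun fun n ↦ ?_) (hneg.congr_fun fun n ↦ ?_) using 1
  · rw [add_conj, hlog]
    simp
  · simp
  · simp

theorem hasSum_int_pow_natAbs_div_mul_cos (hr : |r| < 1) (θ s : ℝ) :
    HasSum (fun i : ℤ ↦ r ^ i.natAbs / i.natAbs * Real.cos ((i - s) * θ))
      (-(Real.cos (s * θ) * Real.log (1 - 2 * Real.cos θ * r + r ^ 2))) := by
  have h := hasSum_re
    ((hasSum_int_pow_natAbs_div_mul_exp hr θ).mul_right (exp ((-(s * θ) : ℝ) * I)))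
  convert! h using 1
  · ext i
    rw [mul_assoc, ← exp_add, ← add_mul, re_ofReal_mul]
    norm_cast
    rw [exp_ofReal_mul_I_re]
    ring_nf
  · rw [re_ofReal_mul, exp_ofReal_mul_I_re, Real.cos_neg]
    ring

end LogSeries

section FiniteFourier

open Real

variable {a : ℕ}

theorem sum_range_cos_int_mul_odd_pi_div (ha : a ≠ 0) (i : ℤ) :
    ∑ j ∈ Finset.range a, cos (i * ((2 * j + 1) * π / a)) =
      if (a : ℤ) ∣ i then (a * (-1) ^ (i / (a : ℤ)) : ℝ) else 0 := by
  have ha' : (a : ℝ) ≠ 0 := Nat.cast_ne_zero.mpr ha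
  split_ifs with hdvd
  · obtain ⟨n, rfl⟩ := hdvd
    have hterm (j : ℕ) : cos (((a * n : ℤ) : ℝ) * ((2 * j + 1) * π / a)) = (-1) ^ n := by
      have harg : ((a * n : ℤ) : ℝ) * ((2 * j + 1) * π / a) = (n * (2 * j + 1) : ℤ) * π := by
        push_cast
        field_simp
      rw [harg, cos_int_mul_pi, mul_comm, zpow_mul, Odd.neg_one_zpow ⟨j, rfl⟩]
    simp only [hterm, Finset.sum_const, Finset.card_range, nsmul_eq_mul]
    rw [Int.mul_ediv_cancel_left _ (Nat.cast_ne_zero.mpr ha)]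
  · have hsin : sin (i * π / a) ≠ 0 := by
      rw [Ne, sin_eq_zero_iff]
      rintro ⟨n, hn⟩
      refine hdvd ⟨n, ?_⟩
      have : (a * n : ℝ) = i := by
        field_simp at hn
        linarith
      exact_mod_cast this.symm
    have hsum := sin_mul_sum_cos a (2 * (i * π / a)) (i * π / a)
    rw [mul_div_cancel_left₀ _ two_ne_zero,
      show a * (2 * (i * π / a)) / 2 = i * π by field_simp, sin_int_mul_pi, zero_mul,
      mul_eq_zero_iff_left hsin] at hsum
    rw [← hsum]
    exact Finset.sum_congr rfl fun j _ ↦ by ring_nf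

theorem injective_natCast_mul_add (ha : a ≠ 0) (b : ℤ) : Function.Injective fun n : ℤ ↦ a * n + b :=
  (add_left_injective b).comp (mul_right_injective₀ (Nat.cast_ne_zero.mpr ha))

theorem hasSum_neg_one_zpow_mul_pow_natAbs_div (ha : a ≠ 0) (b : ℤ) {r : ℝ} (hr : |r| < 1) :
    HasSum (fun n : ℤ ↦ (-1) ^ n * (r ^ (a * n + b).natAbs / (a * n + b).natAbs))
      (-(∑ j ∈ Finset.range a, cos (b * ((2 * j + 1) * π / a)) *
        log (1 - 2 * cos ((2 * j + 1) * π / a) * r + r ^ 2)) / a) := by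
  have hsum := (hasSum_sum fun j (_ : j ∈ Finset.range a) ↦
    hasSum_int_pow_natAbs_div_mul_cos hr ((2 * j + 1) * π / a) b).div_const (a : ℝ)
  have hker (i : ℤ) := sum_range_cos_int_mul_odd_pi_div ha (i - b)
  push_cast at hker
  simp only [← Finset.mul_sum, Finset.sum_neg_distrib, hker] at hsum
  refine (((injective_natCast_mul_add ha b).hasSum_iff fun i hi ↦ ?_).mpr hsum).congr_fun fun n ↦ ?_
  · have hdvd : ¬ (a : ℤ) ∣ i - b := fun ⟨n, hn⟩ ↦ hi ⟨n, by simp only; omega⟩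
    rw [if_neg hdvd, mul_zero, zero_div]
  · have ha' : (a : ℝ) ≠ 0 := Nat.cast_ne_zero.mpr ha
    simp only [Function.comp_apply, add_sub_cancel_right, dvd_mul_right, if_true,
      Int.mul_ediv_cancel_left n (Nat.cast_ne_zero.mpr ha)]
    field_simp

end FiniteFourier

section Products

open Real

variable {ι : Type*} {f : ι → ℝ}

theorem hasSum_log_tprod_one_add (hf : Summable f) (hpos : ∀ i, 0 < 1 + f i) :
    HasSum (fun i ↦ log (1 + f i)) (log (∏' i, (1 + f i))) := by
  have hlog := summable_log_one_add_of_summable hf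
  rw [← rexp_tsum_eq_tprod hpos hlog, log_exp]
  exact hlog.hasSum

theorem tprod_one_add_pos (hf : Summable f) (hpos : ∀ i, 0 < 1 + f i) : 0 < ∏' i, (1 + f i) := by
  rw [← rexp_tsum_eq_tprod hpos (summable_log_one_add_of_summable hf)]
  exact exp_pos _

/-- `∏ (1 - c q^m + q^(2m))` over odd `m ≥ 1`. For `c = 2 cos (2z)` this is the Jacobi theta
function `θ₄(z, q)` with the factor `∏ (1 - q^(2m))` over all `m ≥ 1` removed. -/
noncomputable def thetaFourProd (c q : ℝ) : ℝ :=
  ∏' k : ℕ, (1 - c * q ^ (2 * k + 1) + q ^ (2 * (2 * k + 1)))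

variable {q : ℝ}

theorem abs_pow_lt_one (hq : |q| < 1) {n : ℕ} (hn : n ≠ 0) : |q ^ n| < 1 := by
  rw [abs_pow]
  exact pow_lt_one₀ (abs_nonneg q) hq hn

theorem abs_pow_odd_lt_one (hq : |q| < 1) (k : ℕ) : |q ^ (2 * k + 1)| < 1 :=
  abs_pow_lt_one hq (Nat.succ_ne_zero _)

theorem summable_pow_odd (hq : |q| < 1) : Summable fun k : ℕ ↦ q ^ (2 * k + 1) :=
  (summable_geometric_of_abs_lt_one hq).comp_injective fun k l h ↦ by simpa using h

theorem summable_thetaFourProd_factor_sub_one (c : ℝ) (hq : |q| < 1) :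
    Summable fun k : ℕ ↦ -(c * q ^ (2 * k + 1)) + q ^ (2 * (2 * k + 1)) := by
  simpa only [pow_mul] using
    ((summable_pow_odd hq).mul_left c).neg.add (summable_pow_odd (abs_pow_lt_one hq two_ne_zero))

theorem thetaFourProd_factor_pos (hq : |q| < 1) (θ : ℝ) (k : ℕ) :
    0 < 1 - 2 * cos θ * q ^ (2 * k + 1) + q ^ (2 * (2 * k + 1)) := by
  rw [pow_mul' q 2]
  exact one_sub_two_cos_mul_add_sq_pos (abs_pow_odd_lt_one hq k) θ

theorem multipliable_thetaFourProd (c : ℝ) (hq : |q| < 1) :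
    Multipliable fun k : ℕ ↦ 1 - c * q ^ (2 * k + 1) + q ^ (2 * (2 * k + 1)) := by
  simpa only [← add_assoc, ← sub_eq_add_neg] using
    Real.multipliable_one_add_of_summable (summable_thetaFourProd_factor_sub_one c hq)

theorem thetaFourProd_two_cos_pos (hq : |q| < 1) (θ : ℝ) : 0 < thetaFourProd (2 * cos θ) q := by
  have h := tprod_one_add_pos (summable_thetaFourProd_factor_sub_one (2 * cos θ) hq)
  simp only [← add_assoc, ← sub_eq_add_neg] at h
  exact h (thetaFourProd_factor_pos hq θ)

theorem hasSum_log_thetaFourProd (hq : |q| < 1) (θ : ℝ) :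
    HasSum (fun k : ℕ ↦ log (1 - 2 * cos θ * q ^ (2 * k + 1) + q ^ (2 * (2 * k + 1))))
      (log (thetaFourProd (2 * cos θ) q)) := by
  have h := hasSum_log_tprod_one_add (summable_thetaFourProd_factor_sub_one (2 * cos θ) hq)
  simp only [← add_assoc, ← sub_eq_add_neg] at h
  exact h (thetaFourProd_factor_pos hq θ)

theorem multipliable_chi (hq : |q| < 1) : Multipliable fun k : ℕ ↦ 1 + q ^ (2 * k + 1) :=
  Real.multipliable_one_add_of_summable (summable_pow_odd hq)

theorem chi_pos (hq : |q| < 1) : 0 < chi q :=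
  tprod_one_add_pos (summable_pow_odd hq) fun k ↦ by
    linarith [neg_lt_of_abs_lt (abs_pow_odd_lt_one hq k)]

theorem thetaFourProd_neg_two (hq : |q| < 1) : thetaFourProd (-2) q = chi q ^ 2 := by
  rw [chi, sq, ← (multipliable_chi hq).tprod_mul (multipliable_chi hq), thetaFourProd]
  exact tprod_congr fun k ↦ by ring

theorem chi_pow_five_eq_mul_thetaFourProd (hq : |q| < 1) {α β : ℝ} (hadd : α + β = 1)
    (hmul : α * β = -1) :
    chi (q ^ 5) = chi q * (thetaFourProd α q * thetaFourProd β q) := by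
  have hα := multipliable_thetaFourProd α hq
  have hβ := multipliable_thetaFourProd β hq
  rw [chi, chi, thetaFourProd, thetaFourProd, ← hα.tprod_mul hβ,
    ← (multipliable_chi hq).tprod_mul (hα.mul hβ)]
  refine tprod_congr fun k ↦ ?_
  rw [← pow_mul, mul_comm 5, pow_mul, pow_mul' q 2]
  linear_combination (1 + q ^ (2 * k + 1)) *
    ((q ^ (2 * k + 1) + (q ^ (2 * k + 1)) ^ 3) * hadd - (q ^ (2 * k + 1)) ^ 2 * hmul)

theorem log_chi_pow_five_div (hq : |q| < 1) {α β : ℝ} (hadd : α + β = 1) (hmul : α * β = -1)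
    (hα : thetaFourProd α q ≠ 0) (hβ : thetaFourProd β q ≠ 0) :
    log (chi (q ^ 5) / chi q ^ 5) =
      log (thetaFourProd α q) + log (thetaFourProd β q) - 4 * log (chi q) := by
  have hχ := (chi_pos hq).ne'
  rw [chi_pow_five_eq_mul_thetaFourProd hq hadd hmul,
    log_div (mul_ne_zero hχ (mul_ne_zero hα hβ)) (pow_ne_zero 5 hχ),
    log_mul hχ (mul_ne_zero hα hβ), log_mul hα hβ, log_pow]
  ring

theorem tprod_div_eq_thetaFourProd_div {α β : ℝ} (hq : |q| < 1) (hβ : thetaFourProd β q ≠ 0) :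
    ∏' k : ℕ, (1 - α * q ^ (2 * k + 1) + q ^ (2 * (2 * k + 1))) /
      (1 - β * q ^ (2 * k + 1) + q ^ (2 * (2 * k + 1))) = thetaFourProd α q / thetaFourProd β q :=
  (multipliable_thetaFourProd α hq).tprod_div₀ (multipliable_thetaFourProd β hq) hβ

end Products

section LatticeSum

open Real

variable {a : ℕ} {q : ℝ}

theorem summable_int_pow_natAbs {r : ℝ} (hr : |r| < 1) : Summable fun i : ℤ ↦ r ^ i.natAbs :=
  have hgeom := summable_geometric_of_abs_lt_one hr
  .of_nat_of_neg (by simpa using hgeom) (by simpa using hgeom)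

theorem summable_neg_one_zpow_mul_pow_odd_pow_natAbs_div (ha : a ≠ 0) (b : ℤ) (hq : |q| < 1) :
    Summable fun p : ℤ × ℕ ↦ (-1) ^ p.1 *
      ((q ^ (2 * p.2 + 1)) ^ (a * p.1 + b).natAbs / (a * p.1 + b).natAbs) := by
  have hq' : |(|q|)| < 1 := by rwa [abs_abs]
  have hbound : Summable fun p : ℤ × ℕ ↦ |q| ^ (a * p.1 + b).natAbs * |q| ^ p.2 :=
    ((summable_int_pow_natAbs hq').comp_injective (injective_natCast_mul_add ha b)).mul_of_nonneg
      (summable_geometric_of_abs_lt_one hq') (fun _ ↦ pow_nonneg (abs_nonneg q) _)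
      (fun _ ↦ pow_nonneg (abs_nonneg q) _)
  refine hbound.of_norm_bounded fun ⟨n, k⟩ ↦ ?_
  simp only [norm_mul, norm_zpow, norm_neg, norm_one, one_zpow, one_mul, norm_div, norm_pow,
    Real.norm_eq_abs, Nat.abs_cast]
  rcases Nat.eq_zero_or_pos (a * n + b).natAbs with h | h
  · rw [h]
    simp
  · generalize (a * n + b).natAbs = d at h
    calc (|q| ^ (2 * k + 1)) ^ d / d ≤ (|q| ^ (2 * k + 1)) ^ d :=
          div_le_self (by positivity) (by exact_mod_cast h)
      _ = |q| ^ ((2 * k + 1) * d) := (pow_mul ..).symm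
      _ ≤ |q| ^ (d + k) := pow_le_pow_of_le_one (abs_nonneg q) hq.le (by nlinarith)
      _ = |q| ^ d * |q| ^ k := pow_add ..

theorem hasSum_tsum_of_hasSum_hasSum {ι κ E : Type*} [NormedAddCommGroup E] [CompleteSpace E]
    {f : ι → κ → E} {g : κ → E} {s : E} (hf : Summable fun p : ι × κ ↦ f p.1 p.2)
    (hcol : ∀ k, HasSum (f · k) (g k)) (hg : HasSum g s) :
    HasSum (fun i ↦ ∑' k, f i k) s := by
  have hswap := ((Equiv.prodComm κ ι).hasSum_iff.mpr hf.hasSum).prod_fiberwise hcol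
  rw [hg.unique hswap]
  exact hf.hasSum.prod_fiberwise fun i ↦ (hf.prod_factor i).hasSum

theorem hasSum_tsum_neg_one_zpow_mul_pow_odd_pow_natAbs_div (ha : a ≠ 0) (b : ℤ) (hq : |q| < 1) :
    HasSum (fun n : ℤ ↦ ∑' k : ℕ, (-1) ^ n *
        ((q ^ (2 * k + 1)) ^ (a * n + b).natAbs / (a * n + b).natAbs))
      (-(∑ j ∈ Finset.range a, cos (b * ((2 * j + 1) * π / a)) *
        log (thetaFourProd (2 * cos ((2 * j + 1) * π / a)) q)) / a) := by
  have hsum := summable_neg_one_zpow_mul_pow_odd_pow_natAbs_div ha b hq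
  have hlog := ((hasSum_sum fun j (_ : j ∈ Finset.range a) ↦
    (hasSum_log_thetaFourProd hq ((2 * j + 1) * π / a)).mul_left
      (cos (b * ((2 * j + 1) * π / a)))).neg.div_const (a : ℝ))
  simp only [pow_mul' q 2] at hlog
  exact hasSum_tsum_of_hasSum_hasSum hsum
    (fun k ↦ hasSum_neg_one_zpow_mul_pow_natAbs_div ha b (abs_pow_odd_lt_one hq k)) hlog

theorem hasSum_exp_neg_pow_odd {u : ℝ} (hu : 0 < u) :
    HasSum (fun k : ℕ ↦ exp (-u) ^ (2 * k + 1)) (1 / (2 * sinh u)) := by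
  have hlt : exp (-u) ^ 2 < 1 :=
    pow_lt_one₀ (exp_pos _).le (exp_lt_one_iff.mpr (neg_neg_of_pos hu)) two_ne_zero
  convert! (hasSum_geometric_of_lt_one (sq_nonneg _) hlt).mul_left (exp (-u)) using 1
  · exact funext fun k ↦ by rw [pow_succ', pow_mul]
  · have hfactor : 2 * sinh u = exp u * (1 - exp (-u) ^ 2) := by
      rw [sinh_eq, mul_sub, sq, ← mul_assoc, ← exp_add, add_neg_cancel, exp_zero]
      ring
    rw [hfactor, one_div, mul_inv, exp_neg]

theorem tsum_neg_one_zpow_div_mul_sq_add_sq {x : ℝ} (hx : 0 < x) {i : ℤ} (hi : i ≠ 0) :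
    ∑' m : ℤ, (-1 : ℝ) ^ m / ((x * m) ^ 2 + (i : ℝ) ^ 2) =
      2 * π / x * ∑' k : ℕ, (exp (-π / x) ^ (2 * k + 1)) ^ i.natAbs / i.natAbs := by
  have hd : (0 : ℝ) < i.natAbs := by exact_mod_cast Int.natAbs_pos.mpr hi
  have hsq : (i : ℝ) ^ 2 = (i.natAbs : ℝ) ^ 2 := by rw [Nat.cast_natAbs, Int.cast_abs, sq_abs]
  have hpow (k : ℕ) : (exp (-π / x) ^ (2 * k + 1)) ^ i.natAbs =
      exp (-(π * (i.natAbs / x))) ^ (2 * k + 1) := by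
    rw [pow_right_comm, ← exp_nat_mul]
    ring_nf
  simp only [hsq, hpow, (hasSum_neg_one_zpow_div_mul_sq_add_sq hx.ne' hd.ne').tsum_eq,
    tsum_div_const, (hasSum_exp_neg_pow_odd (mul_pos pi_pos (div_pos hd hx))).tsum_eq]
  field_simp

theorem abs_exp_neg_pi_div_lt_one {x : ℝ} (hx : 0 < x) : |exp (-π / x)| < 1 := by
  rw [abs_exp, exp_lt_one_iff]
  exact div_neg_of_neg_of_pos (neg_neg_of_pos pi_pos) hx

theorem hasSum_tsum_neg_one_zpow_div_lattice (ha : a ≠ 0) {b : ℤ} (hb : ¬ (a : ℤ) ∣ b)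
    {x : ℝ} (hx : 0 < x) :
    HasSum (fun n : ℤ ↦ ∑' m : ℤ, (-1 : ℝ) ^ (m + n) / ((x * m) ^ 2 + (a * n + b) ^ 2))
      (-(2 * π / (a * x)) * ∑ j ∈ Finset.range a, cos (b * ((2 * j + 1) * π / a)) *
        log (thetaFourProd (2 * cos ((2 * j + 1) * π / a)) (exp (-π / x)))) := by
  have hq := abs_exp_neg_pi_div_lt_one hx
  have h := (hasSum_tsum_neg_one_zpow_mul_pow_odd_pow_natAbs_div ha b hq).mul_left (2 * π / x)
  convert! h using 1
  · ext n
    have hne : a * n + b ≠ 0 := fun h0 ↦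
      hb ((dvd_add_right (dvd_mul_right _ n)).mp (h0 ▸ dvd_zero _))
    have hrow := tsum_neg_one_zpow_div_mul_sq_add_sq hx hne
    push_cast at hrow
    rw [tsum_mul_left, mul_left_comm, ← hrow, ← tsum_mul_left]
    exact tsum_congr fun m ↦ by
      rw [add_comm m, zpow_add₀ (by norm_num), mul_div_assoc]
  · field_simp

end LatticeSum

section FifthRoots

open Real

theorem two_mul_cos_pi_div_five : 2 * cos (π / 5) = (1 + √5) / 2 := by
  rw [cos_pi_div_five]
  ring

theorem two_mul_cos_three_mul_pi_div_five : 2 * cos (3 * π / 5) = (1 - √5) / 2 := by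
  have h5 : √5 ^ 2 = 5 := sq_sqrt (by norm_num)
  rw [show 3 * π / 5 = π - 2 * (π / 5) by ring, cos_pi_sub, cos_two_mul, cos_pi_div_five]
  linear_combination -h5 / 4

theorem sum_range_five_cos_mul (f : ℝ → ℝ) :
    ∑ j ∈ Finset.range 5, cos ((2 * j + 1) * π / 5) * f (2 * cos ((2 * j + 1) * π / 5)) =
      (1 + √5) / 2 * f ((1 + √5) / 2) + (1 - √5) / 2 * f ((1 - √5) / 2) - f (-2) := by
  have hcos_seven : cos (7 * π / 5) = cos (3 * π / 5) := by
    rw [← cos_two_pi_sub]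
    ring_nf
  have hcos_nine : cos (9 * π / 5) = cos (π / 5) := by
    rw [← cos_two_pi_sub]
    ring_nf
  have hexpand (g : ℝ → ℝ) : ∑ j ∈ Finset.range 5, g ((2 * j + 1) * π / 5) =
      g (π / 5) + g (3 * π / 5) + g π + g (7 * π / 5) + g (9 * π / 5) := by
    norm_num [Finset.sum_range_succ]
  rw [hexpand fun θ ↦ cos θ * f (2 * cos θ), hcos_seven, hcos_nine, cos_pi, mul_neg_one,
    ← two_mul_cos_pi_div_five, ← two_mul_cos_three_mul_pi_div_five]
  ring

end FifthRoots

/-- For real `x > 0`, with `q = e^{-π/x}`, `β = (1+√5)/2`, `α = (1-√5)/2`,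
`F_{(5,1)}(x) = -(π/(5x)) log(χ(q⁵)/χ⁵(q))
  - (π/(√5 x)) log(∏_{m odd} (1 - β q^m + q^{2m})/(1 - α q^m + q^{2m}))`,
the product running over odd `m ≥ 1`, i.e. `m = 2k+1` for `k = 0, 1, 2, …`. -/
theorem F51_intermediate (x : ℝ) (hx : 0 < x) (q α β : ℝ)
    (hq : q = Real.exp (-Real.pi / x))
    (hβ : β = (1 + Real.sqrt 5) / 2) (hα : α = (1 - Real.sqrt 5) / 2) :
    Tendsto (fun N : ℕ => ∑ n ∈ Finset.Ioo (-(N : ℤ)) (N : ℤ),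
        ∑' m : ℤ, (-1 : ℝ) ^ (m + n) / ((x * m) ^ 2 + (5 * (n : ℝ) + 1) ^ 2))
      atTop
      (nhds (-(Real.pi / (5 * x)) * Real.log (chi (q ^ 5) / (chi q) ^ 5)
        - Real.pi / (Real.sqrt 5 * x) *
          Real.log (∏' k : ℕ,
            (1 - β * q ^ (2 * k + 1) + q ^ (2 * (2 * k + 1)))
              / (1 - α * q ^ (2 * k + 1) + q ^ (2 * (2 * k + 1)))))) := by
  have hq1 : |q| < 1 := hq ▸ abs_exp_neg_pi_div_lt_one hx
  have hβpos : 0 < thetaFourProd β q := by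
    simpa only [hβ, two_mul_cos_pi_div_five] using thetaFourProd_two_cos_pos hq1 (Real.pi / 5)
  have hαpos : 0 < thetaFourProd α q := by
    simpa only [hα, two_mul_cos_three_mul_pi_div_five] using
      thetaFourProd_two_cos_pos hq1 (3 * Real.pi / 5)
  have h5 : √5 ^ 2 = 5 := Real.sq_sqrt (by norm_num)
  have hlogχ := log_chi_pow_five_div hq1 (α := α) (β := β) (by rw [hα, hβ]; ring)
    (by rw [hα, hβ]; linear_combination -h5 / 4) hαpos.ne' hβpos.ne'
  have hlattice := hasSum_tsum_neg_one_zpow_div_lattice (a := 5) (b := 1) (by norm_num)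
    (by norm_num) hx
  simp only [Nat.cast_ofNat, Int.cast_one, one_mul, ← hq,
    sum_range_five_cos_mul fun c ↦ Real.log (thetaFourProd c q), ← hα, ← hβ,
    thetaFourProd_neg_two hq1, Real.log_pow] at hlattice
  convert! hlattice.comp Finset.tendsto_Ioo_neg using 2
  have hcoeff : Real.pi / (√5 * x) = √5 * (Real.pi / (5 * x)) := by
    field_simp
    exact h5.symm
  rw [tprod_div_eq_thetaFourProd_div hq1 hαpos.ne', Real.log_div hβpos.ne' hαpos.ne', hlogχ, hcoeff]
  linear_combination 2 * Real.pi / (5 * x) *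
    (Real.log (thetaFourProd β q) * hβ + Real.log (thetaFourProd α q) * hα)
end
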